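/- Let n ≥ 5 be odd and let Q be the quiver of type D̃_n with vertex set {0,1,…,n} and arrows n→n−2, (n−1)→n−2, i→i−1 for 3 ≤ i ≤ n−2, 2→1 and 2→0. Let σ be the permutation of {0,1,n−1,n} exchanging 0 with 1 and n−1 with n. Then there exists an element Y of ℚ(x_0,…,x_n) such that for every extending vertex i ∈ {0, 1, n−1, n} and every j ≥ 0 one has Y·X^i_{j+n−2} = X^{σ(i)}_j + X^{σ(i)}_{j+2(n−2)}; consequently, for every such i and every j ≥ 0 one also has Y²·X^i_{j+2n−4} = 2·X^i_{j+2n−4} + X^i_j + X^i_{j+2(2n−4)}. -/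

import Mathlib

/-- Arrow multiplicities of the quiver of type D̃_n on vertices `{0,…,n}` with arrows
`n → n−2`, `(n−1) → n−2`, `i → i−1` for `3 ≤ i ≤ n−2`, `2 → 1` and `2 → 0`. -/
def multDtilde (n : ℕ) (s t : Fin (n+1)) : ℕ :=
  if (s.val = n ∧ t.val = n - 2) ∨ (s.val = n - 1 ∧ t.val = n - 2) ∨
     (3 ≤ s.val ∧ s.val ≤ n - 2 ∧ t.val + 1 = s.val) ∨
     (s.val = 2 ∧ t.val = 1) ∨ (s.val = 2 ∧ t.val = 0) then 1 else 0

/-!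
Grade the vertices of D̃_n so that the arrows are exactly the pairs of vertices at consecutive
levels: the two end levels are `{0, 1}` and `{n - 1, n}`, every other level is a single vertex.
The level products satisfy the frieze relations, except that the two ends carry squares
`(1 + z) ^ 2 = 1 + z * (z + 2)`; reading `z + 2` as a further row on either side turns the strip
into an `SL₂`-tiling. In such a tiling the coefficient of the three-term recurrence along columns
is constant on diagonals, and that of the recurrence along diagonals is constant on columns;
carrying the coefficient from one end of the strip to the other in both ways shows that it has
period `n - 2`. The frieze sequences at the two vertices of an end level solve the resulting
discrete Hill equation, up to being interchanged at each step, and Cayley–Hamilton for its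
monodromy matrix gives the relation, with `Y` the trace.
-/

section PosFractions

variable {R K k : Type*} [CommSemiring R] [CommSemiring K] [Algebra R K]
  [CommSemiring k] [PartialOrder k] [IsStrictOrderedRing k] {φ : R →+* k}

/-- The elements of an `R`-algebra that are quotients of elements of `R` at which `φ` is positive.
They form a cone of nonzero elements of the fraction field, stable under division. -/
def posFractions (K : Type*) [CommSemiring K] [Algebra R K] (φ : R →+* k) : Submonoid K where
  carrier := {f | ∃ a b : R, 0 < φ a ∧ 0 < φ b ∧ f * algebraMap R K b = algebraMap R K a}
  one_mem' := ⟨1, 1, by simp, by simp, by simp⟩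
  mul_mem' := by
    rintro f g ⟨a, b, ha, hb, hf⟩ ⟨a', b', ha', hb', hg⟩
    refine ⟨a * a', b * b', ?_, ?_, ?_⟩
    · simpa only [map_mul] using mul_pos ha ha'
    · simpa only [map_mul] using mul_pos hb hb'
    · rw [map_mul, map_mul, ← hf, ← hg, mul_mul_mul_comm]

lemma algebraMap_mem_posFractions {a : R} (ha : 0 < φ a) : algebraMap R K a ∈ posFractions K φ :=
  ⟨a, 1, ha, by simp, by simp⟩

lemma add_mem_posFractions {f g : K} (hf : f ∈ posFractions K φ) (hg : g ∈ posFractions K φ) :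
    f + g ∈ posFractions K φ := by
  obtain ⟨a, b, ha, hb, hf⟩ := hf
  obtain ⟨a', b', ha', hb', hg⟩ := hg
  refine ⟨a * b' + a' * b, b * b', ?_, ?_, ?_⟩
  · simpa only [map_add, map_mul] using add_pos (mul_pos ha hb') (mul_pos ha' hb)
  · simpa only [map_mul] using mul_pos hb hb'
  · rw [map_add, map_mul, map_mul, map_mul, ← hf, ← hg]
    ring

lemma mem_posFractions_of_mul_mem {f g : K} (hfg : f * g ∈ posFractions K φ)
    (hg : g ∈ posFractions K φ) : f ∈ posFractions K φ := by
  obtain ⟨a, b, ha, hb, hfg⟩ := hfg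
  obtain ⟨a', b', ha', hb', hg⟩ := hg
  refine ⟨a * b', b * a', ?_, ?_, ?_⟩
  · simpa only [map_mul] using mul_pos ha hb'
  · simpa only [map_mul] using mul_pos hb ha'
  · rw [map_mul, map_mul, ← hfg, ← hg]
    ring

lemma ne_zero_of_mem_posFractions [FaithfulSMul R K] {f : K} (hf : f ∈ posFractions K φ) :
    f ≠ 0 := by
  rintro rfl
  obtain ⟨a, b, ha, -, h⟩ := hf
  rw [zero_mul, eq_comm, FaithfulSMul.algebraMap_eq_zero_iff] at h
  simp [h] at ha

end PosFractions

section Frieze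

variable {ι R K k : Type*} [Fintype ι]

/-- The families of frieze sequences, in a commutative semiring and with arbitrary initial values,
of the quiver with vertex set `ι` and `μ s t` arrows from `s` to `t`. -/
def IsFrieze [CommSemiring K] (μ : ι → ι → ℕ) (X : ι → ℕ → K) : Prop :=
  ∀ v j, X v (j + 1) * X v j = 1 + (∏ s, X s (j + 1) ^ μ s v) * ∏ d, X d j ^ μ v d

/-- The arrow multiplicities of the quiver with exactly one arrow from each vertex to each vertex
one level below it. -/
def gradedMult (ℓ : ι → ℕ) (s t : ι) : ℕ := if ℓ s = ℓ t + 1 then 1 else 0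

/-- The sequence of products of the entries of `X` over the vertices of level `i`. -/
def levelProd [CommMonoid K] (ℓ : ι → ℕ) (X : ι → ℕ → K) (i j : ℕ) : K := ∏ v with ℓ v = i, X v j

/-- The coefficient of the three-term recurrence relating the sequences at two vertices that make
up the level `i + 1`, where `L` is the array of level products. -/
def levelCoeff [Semifield K] (L : ℕ → ℕ → K) (i x : ℕ) : K :=
  (L (i + 2) (x + 1) * L i x + L (i + 2) (x + 2) * L i (x + 1) + 2) / L (i + 1) (x + 1)

lemma levelProd_eq_mul [CommMonoid K] [DecidableEq ι] {ℓ : ι → ℕ} {v w : ι} {i : ℕ} (hvw : v ≠ w)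
    (h : ({u | ℓ u = i} : Finset ι) = {v, w}) (X : ι → ℕ → K) (j : ℕ) :
    levelProd ℓ X i j = X v j * X w j := by
  rw [levelProd, h, Finset.prod_pair hvw]

lemma levelProd_eq_one [CommMonoid K] {ℓ : ι → ℕ} {i : ℕ} (h : ∀ v, ℓ v ≠ i) (X : ι → ℕ → K)
    (j : ℕ) : levelProd ℓ X i j = 1 := by
  simp [levelProd, h]

namespace IsFrieze

theorem mem_posFractions [CommSemiring R] [CommSemiring K] [Algebra R K] [CommSemiring k]
    [PartialOrder k] [IsStrictOrderedRing k] {φ : R →+* k} {μ : ι → ι → ℕ} {X : ι → ℕ → K}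
    (hX : IsFrieze μ X) (hμ : WellFounded fun s t ↦ μ s t ≠ 0)
    (h0 : ∀ v, X v 0 ∈ posFractions K φ) (v : ι) (j : ℕ) : X v j ∈ posFractions K φ := by
  induction j generalizing v with
  | zero => exact h0 v
  | succ j ihj =>
    induction v using hμ.induction with
    | _ v ihv =>
      have hin : ∏ s, X s (j + 1) ^ μ s v ∈ posFractions K φ := by
        refine prod_mem fun s _ ↦ ?_
        obtain hs | hs := eq_or_ne (μ s v) 0
        · simp only [hs, pow_zero, one_mem]
        · exact pow_mem (ihv s hs) _
      have hout : ∏ d, X d j ^ μ v d ∈ posFractions K φ := prod_mem fun d _ ↦ pow_mem (ihj d) _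
      refine mem_posFractions_of_mul_mem ?_ (ihj v)
      rw [hX]
      exact add_mem_posFractions (one_mem _) (mul_mem hin hout)

lemma mul_eq_of_level [CommSemiring K] {ℓ : ι → ℕ} {X : ι → ℕ → K}
    (hX : IsFrieze (gradedMult ℓ) X) {v : ι} {i : ℕ} (hv : ℓ v = i + 1) (j : ℕ) :
    X v (j + 1) * X v j = 1 + levelProd ℓ X (i + 2) (j + 1) * levelProd ℓ X i j := by
  simp only [hX v j, gradedMult, levelProd, hv, add_left_inj, eq_comm (a := i), pow_ite, pow_one,
    pow_zero, Finset.prod_filter]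

lemma levelProd_mul [CommSemiring K] {ℓ : ι → ℕ} {X : ι → ℕ → K}
    (hX : IsFrieze (gradedMult ℓ) X) (i j : ℕ) :
    levelProd ℓ X (i + 1) (j + 1) * levelProd ℓ X (i + 1) j =
      (1 + levelProd ℓ X (i + 2) (j + 1) * levelProd ℓ X i j) ^
        Finset.card {v | ℓ v = i + 1} := by
  rw [levelProd, levelProd, ← Finset.prod_mul_distrib]
  exact Finset.prod_eq_pow_card fun v hv ↦ hX.mul_eq_of_level (Finset.mem_filter.mp hv).2 j

lemma add_eq_levelCoeff_mul [Semifield K] [DecidableEq ι] {ℓ : ι → ℕ} {X : ι → ℕ → K}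
    (hX : IsFrieze (gradedMult ℓ) X) (hne : ∀ v j, X v j ≠ 0) {v w : ι} {i : ℕ} (hvw : v ≠ w)
    (h : ({u | ℓ u = i + 1} : Finset ι) = {v, w}) (x : ℕ) :
    X v (x + 2) + X v x = levelCoeff (levelProd ℓ X) i x * X w (x + 1) := by
  have hv : ℓ v = i + 1 := by
    rw [← Finset.mem_filter_univ (p := (ℓ · = i + 1)), h]
    exact Finset.mem_insert_self v {w}
  have hv₀ := hX.mul_eq_of_level hv x
  have hv₁ := hX.mul_eq_of_level hv (x + 1)
  have hv_ne := hne v (x + 1)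
  have hw_ne := hne w (x + 1)
  rw [levelCoeff, levelProd_eq_mul hvw h, div_mul_eq_mul_div, mul_div_mul_right _ _ hw_ne,
    eq_div_iff hv_ne, add_mul, hv₁, mul_comm (X v x), hv₀]
  ring

end IsFrieze

end Frieze

section Tiling

variable {K : Type*} [Field K] {T : ℕ → ℕ → K} {N : ℕ}
  (hne : ∀ i b, i < N → T (i + 1) b ≠ 0)
  (hT : ∀ i j, i < N → T (i + 1) (j + 1) * T (i + 1) j = 1 + T (i + 2) (j + 1) * T i j)
include hne hT

lemma tiling_coeff_eq_of_column (b : ℕ) {i : ℕ} (hi : i < N) :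
    (T i b + T (i + 2) (b + 2)) / T (i + 1) (b + 1) = (T 0 b + T 2 (b + 2)) / T 1 (b + 1) := by
  induction i with
  | zero => rfl
  | succ i ih =>
    rw [← ih (by omega), div_eq_div_iff (hne _ _ hi) (hne _ _ (by omega))]
    linear_combination hT i b (by omega) - hT (i + 1) (b + 1) hi

lemma tiling_coeff_eq_of_diagonal (b : ℕ) {i : ℕ} (hi : i < N) :
    (T i (b + i) + T (i + 2) (b + i)) / T (i + 1) (b + i) = (T 0 b + T 2 b) / T 1 b := by
  induction i with
  | zero => rfl
  | succ i ih =>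
    rw [← ih (by omega), ← add_assoc, div_eq_div_iff (hne _ _ hi) (hne _ _ (by omega))]
    linear_combination hT i (b + i) (by omega) - hT (i + 1) (b + i) hi

end Tiling

section FoldedFrieze

variable {K : Type*}

/-- The relations between the level products of frieze sequences of type D̃_{m+2}: a strip with
rows `1, …, m + 1`, bordered by rows of ones, whose two extreme rows each stand for two vertices. -/
structure IsFoldedFrieze [CommSemiring K] (m : ℕ) (L : ℕ → ℕ → K) : Prop where
  ne_zero (i j : ℕ) : L i j ≠ 0
  bottom (j : ℕ) : L 0 j = 1
  top (j : ℕ) : L (m + 2) j = 1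
  mul_eq_first (j : ℕ) : L 1 (j + 1) * L 1 j = (1 + L 2 (j + 1)) ^ 2
  mul_eq_inner (i j : ℕ) (hi : 0 < i) (him : i < m) :
    L (i + 1) (j + 1) * L (i + 1) j = 1 + L (i + 2) (j + 1) * L i j
  mul_eq_last (j : ℕ) : L (m + 1) (j + 1) * L (m + 1) j = (1 + L m j) ^ 2

/-- The strip `L` with its border rows `0` and `m + 2` replaced so as to obtain an `SL₂`-tiling.
The entry `(m + 2, 0)` is a junk value, which the tiling relation does not involve. -/
def unfoldedStrip [Semiring K] (m : ℕ) (L : ℕ → ℕ → K) (i j : ℕ) : K :=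
  if i = 0 then L 2 (j + 1) + 2 else if i = m + 2 then L m (j - 1) + 2 else L i j

section Semiring

variable [Semiring K] {m : ℕ} {L : ℕ → ℕ → K}

lemma unfoldedStrip_zero (j : ℕ) : unfoldedStrip m L 0 j = L 2 (j + 1) + 2 := rfl

lemma unfoldedStrip_top (j : ℕ) : unfoldedStrip m L (m + 2) (j + 1) = L m j + 2 := by
  simp [unfoldedStrip]

lemma unfoldedStrip_of_pos_of_lt {i : ℕ} (hi : 0 < i) (him : i < m + 2) :
    unfoldedStrip m L i = L i := by
  ext j
  rw [unfoldedStrip, if_neg hi.ne', if_neg him.ne]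

end Semiring

namespace IsFoldedFrieze

variable [Field K] {m : ℕ} {L : ℕ → ℕ → K}

lemma unfoldedStrip_mul (hL : IsFoldedFrieze m L) (hm : 0 < m) {i : ℕ} (hi : i < m + 1) (j : ℕ) :
    unfoldedStrip m L (i + 1) (j + 1) * unfoldedStrip m L (i + 1) j =
      1 + unfoldedStrip m L (i + 2) (j + 1) * unfoldedStrip m L i j := by
  rw [unfoldedStrip_of_pos_of_lt i.succ_pos (by omega)]
  obtain rfl | rfl | ⟨hi0, him⟩ : i = 0 ∨ i = m ∨ (0 < i ∧ i < m) := by omega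
  · rw [zero_add, unfoldedStrip_of_pos_of_lt two_pos (by omega), unfoldedStrip_zero]
    linear_combination hL.mul_eq_first j
  · rw [unfoldedStrip_top, unfoldedStrip_of_pos_of_lt hm (by omega)]
    linear_combination hL.mul_eq_last j
  · rw [unfoldedStrip_of_pos_of_lt (by omega) (by omega),
      unfoldedStrip_of_pos_of_lt hi0 (by omega)]
    exact hL.mul_eq_inner i j hi0 him

lemma unfoldedStrip_ne_zero (hL : IsFoldedFrieze m L) {i : ℕ} (hi : i < m + 1) (j : ℕ) :
    unfoldedStrip m L (i + 1) j ≠ 0 := by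
  rw [unfoldedStrip_of_pos_of_lt i.succ_pos (by omega)]
  exact hL.ne_zero _ _

lemma levelCoeff_zero (hL : IsFoldedFrieze m L) (x : ℕ) :
    levelCoeff L 0 x = (L 2 (x + 1) + L 2 (x + 2) + 2) / L 1 (x + 1) := by
  simp only [levelCoeff, hL.bottom, mul_one, zero_add]

lemma levelCoeff_last (hL : IsFoldedFrieze m L) (x : ℕ) :
    levelCoeff L m x = (L m x + L m (x + 1) + 2) / L (m + 1) (x + 1) := by
  simp only [levelCoeff, hL.top, one_mul]

theorem levelCoeff_last_eq (hL : IsFoldedFrieze m L) (hm : 0 < m) (x : ℕ) :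
    levelCoeff L m x = levelCoeff L 0 x := by
  have h := tiling_coeff_eq_of_column (fun _ b hi ↦ hL.unfoldedStrip_ne_zero hi b)
    (fun _ j hi ↦ hL.unfoldedStrip_mul hm hi j) x m.lt_succ_self
  rw [unfoldedStrip_of_pos_of_lt hm (by omega), unfoldedStrip_top, unfoldedStrip_zero,
    unfoldedStrip_of_pos_of_lt m.succ_pos (by omega),
    unfoldedStrip_of_pos_of_lt two_pos (by omega),
    unfoldedStrip_of_pos_of_lt one_pos (by omega)] at h
  rw [hL.levelCoeff_zero, hL.levelCoeff_last, add_assoc, h, add_right_comm]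

theorem levelCoeff_last_add (hL : IsFoldedFrieze m L) (hm : 0 < m) (x : ℕ) :
    levelCoeff L m (x + m) = levelCoeff L 0 x := by
  have h := tiling_coeff_eq_of_diagonal (fun _ b hi ↦ hL.unfoldedStrip_ne_zero hi b)
    (fun _ j hi ↦ hL.unfoldedStrip_mul hm hi j) (x + 1) m.lt_succ_self
  rw [add_right_comm, unfoldedStrip_of_pos_of_lt hm (by omega), unfoldedStrip_top,
    unfoldedStrip_zero, unfoldedStrip_of_pos_of_lt m.succ_pos (by omega),
    unfoldedStrip_of_pos_of_lt two_pos (by omega),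
    unfoldedStrip_of_pos_of_lt one_pos (by omega)] at h
  rw [hL.levelCoeff_zero, hL.levelCoeff_last, add_comm (L m (x + m)), add_assoc, h, add_right_comm,
    add_comm (L 2 (x + 1))]

theorem levelCoeff_zero_periodic (hL : IsFoldedFrieze m L) (hm : 0 < m) :
    Function.Periodic (levelCoeff L 0) m := fun x ↦ by
  rw [← hL.levelCoeff_last_eq hm, hL.levelCoeff_last_add hm]

end IsFoldedFrieze

end FoldedFrieze

section Hill

variable {K : Type*} [CommRing K]

lemma mul_self_add_one_eq_trace_smul {A : Matrix (Fin 2) (Fin 2) K} (hA : A.det = 1) :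
    A * A + 1 = A.trace • A := by
  nontriviality K
  have h := A.aeval_self_charpoly
  simp only [Matrix.charpoly_fin_two, hA, map_add, map_sub, map_mul, map_pow, map_one,
    Polynomial.aeval_X, Polynomial.aeval_C, ← Algebra.smul_def] at h
  rw [← sub_eq_zero, ← h]
  noncomm_ring

/-- The solutions of the discrete Hill equation with potential `c`. -/
def hillSolutions (c : ℕ → K) : Submodule K (ℕ → K) where
  carrier := {v | ∀ x, v (x + 2) + v x = c x * v (x + 1)}
  zero_mem' x := by simp
  add_mem' {u v} hu hv x := by
    simp only [Pi.add_apply]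
    linear_combination hu x + hv x
  smul_mem' a v hv x := by
    simp only [Pi.smul_apply, smul_eq_mul]
    linear_combination a * hv x

/-- The matrix propagating the state `(v 0, v 1)` of a solution of the discrete Hill equation with
potential `c` to the state `(v m, v (m + 1))`. -/
def hillTransfer (c : ℕ → K) : ℕ → Matrix (Fin 2) (Fin 2) K
  | 0 => 1
  | m + 1 => !![0, 1; -1, c m] * hillTransfer c m

variable {c v : ℕ → K} {m : ℕ}

lemma det_hillTransfer (c : ℕ → K) (m : ℕ) : (hillTransfer c m).det = 1 := by
  induction m with
  | zero => exact Matrix.det_one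
  | succ m ih => rw [hillTransfer, Matrix.det_mul, ih, Matrix.det_fin_two_of]; ring

lemma hillTransfer_mulVec (hv : v ∈ hillSolutions c) (m : ℕ) :
    (hillTransfer c m).mulVec ![v 0, v 1] = ![v m, v (m + 1)] := by
  induction m with
  | zero => exact Matrix.one_mulVec _
  | succ m ih =>
    have hstep : v (m + 2) = -v m + c m * v (m + 1) := by linear_combination hv m
    rw [hillTransfer, ← Matrix.mulVec_mulVec, ih]
    ext i
    fin_cases i <;> simp [Matrix.mulVec, Matrix.vecHead, Matrix.vecTail, hstep]

lemma eq_zero_of_mem_hillSolutions (hv : v ∈ hillSolutions c) (h0 : v 0 = 0) (h1 : v 1 = 0) :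
    v = 0 := by
  ext m
  have h := hillTransfer_mulVec hv m
  simp only [h0, h1] at h
  simpa using (congrFun h 0).symm

lemma shift_mem_hillSolutions (hc : Function.Periodic c m) (hv : v ∈ hillSolutions c) :
    (fun x ↦ v (x + m)) ∈ hillSolutions c := fun x ↦ by
  simpa only [hc x, add_right_comm x m] using hv (x + m)

theorem trace_hillTransfer_mul (hc : Function.Periodic c m) (hv : v ∈ hillSolutions c) (j : ℕ) :
    (hillTransfer c m).trace * v (j + m) = v j + v (j + 2 * m) := by
  set A := hillTransfer c m
  have hv₁ := shift_mem_hillSolutions hc hv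
  have hv₂ := shift_mem_hillSolutions hc hv₁
  have hstate₁ : A.mulVec ![v 0, v 1] = ![v m, v (1 + m)] := by
    simpa only [add_comm 1 m] using hillTransfer_mulVec hv m
  have hstate₂ : A.mulVec ![v m, v (1 + m)] = ![v (m + m), v (1 + m + m)] := by
    simpa only [zero_add, add_right_comm m 1, add_comm 1 m] using hillTransfer_mulVec hv₁ m
  have hinit := congrArg (Matrix.mulVec · ![v 0, v 1])
    (mul_self_add_one_eq_trace_smul (det_hillTransfer c m))
  simp only [Matrix.add_mulVec, ← Matrix.mulVec_mulVec, Matrix.smul_mulVec, Matrix.one_mulVec]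
    at hinit
  rw [hstate₁, hstate₂] at hinit
  have hzero := eq_zero_of_mem_hillSolutions
    (sub_mem (add_mem hv₂ hv) (Submodule.smul_mem _ A.trace hv₁))
    (by simpa [sub_eq_zero] using congrFun hinit 0) (by simpa [sub_eq_zero] using congrFun hinit 1)
  have hj := congrFun hzero j
  simp only [Pi.sub_apply, Pi.add_apply, Pi.smul_apply, Pi.zero_apply, smul_eq_mul] at hj
  rw [two_mul, ← add_assoc]
  linear_combination -hj

theorem trace_hillTransfer_mul_of_swap (hc : Function.Periodic c m) {P Q : ℕ → K}
    (hP : ∀ x, P (x + 2) + P x = c x * Q (x + 1)) (hQ : ∀ x, Q (x + 2) + Q x = c x * P (x + 1))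
    (j : ℕ) :
    (hillTransfer c m).trace * P (j + m) =
      (if Even m then P else Q) j + (if Even m then P else Q) (j + 2 * m) := by
  have halt : (fun x ↦ if Even (x + (j + m)) then P x else Q x) ∈ hillSolutions c := fun x ↦ by
    have hPx := hP x
    have hQx := hQ x
    grind
  have h := trace_hillTransfer_mul hc halt j
  have hj : Even (j + (j + m)) ↔ Even m := by grind
  have hj' : Even (j + 2 * m + (j + m)) ↔ Even m := by grind
  simp only [Even.add_self, if_true, hj, hj'] at h
  split_ifs at h ⊢ <;> exact h

theorem sq_mul_of_mul_eq_add {Y : K} {P Q : ℕ → K}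
    (hP : ∀ j, Y * P (j + m) = Q j + Q (j + 2 * m))
    (hQ : ∀ j, Y * Q (j + m) = P j + P (j + 2 * m)) (j : ℕ) :
    Y ^ 2 * P (j + 2 * m) = 2 * P (j + 2 * m) + P j + P (j + 2 * (2 * m)) := by
  have hmid := hP (j + m)
  have htop := hQ (j + 2 * m)
  rw [show j + m + m = j + 2 * m by ring, show j + m + 2 * m = j + 2 * m + m by ring] at hmid
  rw [show j + 2 * m + 2 * m = j + 2 * (2 * m) by ring] at htop
  linear_combination Y * hmid + hQ j + htop

end Hill

section Dtilde

/-- The level of a vertex of D̃_{m+2}: the pairs `{0, 1}` and `{m + 1, m + 2}` form the levels `1`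
and `m + 1`, every other vertex is its own level. -/
def dtildeLevel (m : ℕ) (v : Fin (m + 3)) : ℕ := max 1 (min v (m + 1))

variable {m : ℕ}

lemma multDtilde_eq_gradedMult (hm : 2 ≤ m) :
    multDtilde (m + 2) = gradedMult (dtildeLevel m) := by
  ext s t
  simp only [multDtilde, gradedMult, dtildeLevel]
  congr 1
  apply propext
  omega

lemma wellFounded_multDtilde {n : ℕ} (hn : 4 ≤ n) :
    WellFounded fun s t ↦ multDtilde n s t ≠ 0 := by
  refine Subrelation.wf (r := (· > ·)) (fun {s t} h ↦ ?_) wellFounded_gt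
  change t < s
  rw [Fin.lt_def]
  simp only [multDtilde, ne_eq, ite_eq_right_iff, one_ne_zero, imp_false, not_not] at h
  omega

lemma filter_dtildeLevel_eq_one (hm : 0 < m) {v w : Fin (m + 3)} (hv : v.val = 0)
    (hw : w.val = 1) : ({u | dtildeLevel m u = 1} : Finset _) = {v, w} := by
  ext u
  rw [Finset.mem_filter_univ, Finset.mem_insert, Finset.mem_singleton, Fin.ext_iff, Fin.ext_iff,
    dtildeLevel]
  omega

lemma filter_dtildeLevel_eq_last (hm : 0 < m) {v w : Fin (m + 3)} (hv : v.val = m + 1)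
    (hw : w.val = m + 2) : ({u | dtildeLevel m u = m + 1} : Finset _) = {v, w} := by
  ext u
  rw [Finset.mem_filter_univ, Finset.mem_insert, Finset.mem_singleton, Fin.ext_iff, Fin.ext_iff,
    dtildeLevel]
  omega

lemma card_dtildeLevel_eq_inner {i : ℕ} (hi : 1 < i) (him : i < m + 1) :
    Finset.card {u | dtildeLevel m u = i} = 1 := by
  refine Finset.card_eq_one.mpr ⟨⟨i, by omega⟩, ?_⟩
  ext u
  rw [Finset.mem_filter_univ, Finset.mem_singleton, Fin.ext_iff, dtildeLevel]
  dsimp only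
  omega

theorem isFoldedFrieze_levelProd {K : Type*} [CommSemiring K] [Nontrivial K] [NoZeroDivisors K]
    (hm : 0 < m) {X : Fin (m + 3) → ℕ → K} (hne : ∀ v j, X v j ≠ 0)
    (hX : IsFrieze (gradedMult (dtildeLevel m)) X) :
    IsFoldedFrieze m (levelProd (dtildeLevel m) X) := by
  have hbottom := levelProd_eq_one (ℓ := dtildeLevel m) (i := 0)
    (fun v ↦ by simp only [dtildeLevel]; omega) X
  have htop := levelProd_eq_one (ℓ := dtildeLevel m) (i := m + 2)
    (fun v ↦ by simp only [dtildeLevel]; omega) X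
  refine ⟨fun i j ↦ Finset.prod_ne_zero_iff.mpr fun v _ ↦ hne v j, hbottom, htop,
    fun j ↦ ?_, fun i j hi him ↦ ?_, fun j ↦ ?_⟩
  · have h := hX.levelProd_mul 0 j
    rwa [hbottom, mul_one, zero_add, filter_dtildeLevel_eq_one hm (v := ⟨0, by omega⟩)
      (w := ⟨1, by omega⟩) rfl rfl, Finset.card_pair (by simp)] at h
  · have h := hX.levelProd_mul i j
    rwa [card_dtildeLevel_eq_inner (by omega) (by omega), pow_one] at h
  · have h := hX.levelProd_mul m j
    rwa [htop, one_mul, filter_dtildeLevel_eq_last hm (v := ⟨m + 1, by omega⟩)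
      (w := ⟨m + 2, by omega⟩) rfl rfl, Finset.card_pair (by simp)] at h

theorem add_eq_levelCoeff_mul_of_swap {K : Type*} [Field K] (hm : 0 < m) {X : Fin (m + 3) → ℕ → K}
    (hne : ∀ v j, X v j ≠ 0) (hX : IsFrieze (gradedMult (dtildeLevel m)) X) {i si : Fin (m + 3)}
    (h : (i.val = 0 ∧ si.val = 1) ∨ (i.val = 1 ∧ si.val = 0) ∨
      (i.val = m + 1 ∧ si.val = m + 2) ∨ (i.val = m + 2 ∧ si.val = m + 1)) (x : ℕ) :
    X i (x + 2) + X i x = levelCoeff (levelProd (dtildeLevel m) X) 0 x * X si (x + 1) := by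
  have hisi : i ≠ si := by rw [ne_eq, Fin.ext_iff]; omega
  have hcoeff := (isFoldedFrieze_levelProd hm hne hX).levelCoeff_last_eq hm x
  rcases h with ⟨hi, hsi⟩ | ⟨hi, hsi⟩ | ⟨hi, hsi⟩ | ⟨hi, hsi⟩
  · exact hX.add_eq_levelCoeff_mul hne hisi (filter_dtildeLevel_eq_one hm hi hsi) x
  · exact hX.add_eq_levelCoeff_mul hne hisi
      ((filter_dtildeLevel_eq_one hm hsi hi).trans (Finset.pair_comm _ _)) x
  · rw [← hcoeff]
    exact hX.add_eq_levelCoeff_mul hne hisi (filter_dtildeLevel_eq_last hm hi hsi) x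
  · rw [← hcoeff]
    exact hX.add_eq_levelCoeff_mul hne hisi
      ((filter_dtildeLevel_eq_last hm hsi hi).trans (Finset.pair_comm _ _)) x

end Dtilde

theorem stmt_15_general {K : Type*} [Field K] (n : ℕ) (hn : 4 ≤ n) (X : Fin (n + 1) → ℕ → K)
    (hne : ∀ v j, X v j ≠ 0) (hX : IsFrieze (multDtilde n) X) :
    ∃ Y : K, ∀ i si : Fin (n + 1),
      ((i.val = 0 ∧ si.val = 1) ∨ (i.val = 1 ∧ si.val = 0) ∨
        (i.val = n - 1 ∧ si.val = n) ∨ (i.val = n ∧ si.val = n - 1)) →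
      ∀ j : ℕ,
        Y * X i (j + (n - 2)) =
          X (if Even n then i else si) j + X (if Even n then i else si) (j + 2 * (n - 2)) ∧
        Y ^ 2 * X i (j + (2 * n - 4)) =
          2 * X i (j + (2 * n - 4)) + X i j + X i (j + 2 * (2 * n - 4)) := by
  obtain ⟨m, rfl⟩ : ∃ m, n = m + 2 := ⟨n - 2, by omega⟩
  have hm : 0 < m := by omega
  rw [multDtilde_eq_gradedMult (by omega)] at hX
  have hper := (isFoldedFrieze_levelProd hm hne hX).levelCoeff_zero_periodic hm
  have hparity : Even (m + 2) ↔ Even m := by simp [Nat.even_add]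
  refine ⟨(hillTransfer (levelCoeff (levelProd (dtildeLevel m) X) 0) m).trace, fun i si h j ↦ ?_⟩
  have hi := add_eq_levelCoeff_mul_of_swap hm hne hX h
  have hsi := add_eq_levelCoeff_mul_of_swap (i := si) (si := i) hm hne hX (by omega)
  have hYi := trace_hillTransfer_mul_of_swap hper hi hsi
  have hYsi := trace_hillTransfer_mul_of_swap hper hsi hi
  rw [show 2 * (m + 2) - 4 = 2 * m by omega, Nat.add_sub_cancel]
  simp only [hparity]
  split_ifs at hYi hYsi ⊢
  · exact ⟨hYi j, sq_mul_of_mul_eq_add hYi hYi j⟩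
  · exact ⟨hYi j, sq_mul_of_mul_eq_add hYi hYsi j⟩

/-- Let `n ≥ 5` be odd and `Q` the above quiver of type D̃_n, and let `σ` be
the permutation of the extending vertices `{0,1,n−1,n}` exchanging `0 ↔ 1` and `n−1 ↔ n`
(below `i` is an extending vertex and `si = σ(i)`). Then there is an element `Y` of
`ℚ(x_0,…,x_n)` such that for every extending vertex `i` and every `j ≥ 0` one has
`Y·X^i_{j+n−2} = X^{σ(i)}_j + X^{σ(i)}_{j+2(n−2)}`, and consequently
`Y²·X^i_{j+2n−4} = 2·X^i_{j+2n−4} + X^i_j + X^i_{j+2(2n−4)}`. -/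
theorem stmt_15 (n : ℕ) (hn : 5 ≤ n) (hodd : Odd n)
    -- the frieze sequences
    (X : Fin (n+1) → ℕ → FractionRing (MvPolynomial (Fin (n+1)) ℚ))
    (hX0 : ∀ v, X v 0 = algebraMap (MvPolynomial (Fin (n+1)) ℚ)
      (FractionRing (MvPolynomial (Fin (n+1)) ℚ)) (MvPolynomial.X v))
    (hXrec : ∀ v (j : ℕ), X v (j+1) * X v j =
      1 + (∏ s : Fin (n+1), X s (j+1) ^ multDtilde n s v) *
          (∏ d : Fin (n+1), X d j ^ multDtilde n v d)) :
    ∃ Y : FractionRing (MvPolynomial (Fin (n+1)) ℚ),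
      ∀ i si : Fin (n+1),
        ((i.val = 0 ∧ si.val = 1) ∨ (i.val = 1 ∧ si.val = 0) ∨
         (i.val = n - 1 ∧ si.val = n) ∨ (i.val = n ∧ si.val = n - 1)) →
        ∀ j : ℕ,
          Y * X i (j + (n - 2)) = X si j + X si (j + 2 * (n - 2)) ∧
          Y ^ 2 * X i (j + (2 * n - 4)) =
            2 * X i (j + (2 * n - 4)) + X i j + X i (j + 2 * (2 * n - 4)) := by
  have hne (v : Fin (n + 1)) (j : ℕ) : X v j ≠ 0 :=
    ne_zero_of_mem_posFractions <|
      IsFrieze.mem_posFractions (φ := MvPolynomial.eval 1) hXrec (wellFounded_multDtilde (by omega))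
        (fun v ↦ hX0 v ▸ algebraMap_mem_posFractions (by simp)) v j
  simpa only [Nat.not_even_iff_odd.mpr hodd, if_false] using
    stmt_15_general n (by omega) X hne hXrec
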